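/- Let f : X → Y be a fully closed continuous surjection of a compact Hausdorff space X onto a metrizable compact space Y with metrizable fibers f⁻¹(y), y ∈ Y. Let K be a finite subset of a countable set A ⊆ Y, let h ∈ Z_A and let c > 1. Then there exists p ∈ C(X) such that ‖p − h‖_∞ ≤ c · sup{Ω_f(h)(y) : y ∈ A∖K} and Ω_f(p)(y) = 0 for every y ∈ Y∖K (that is, p ∈ Z_K). -/

import Mathlib

open Set Metric Topology Filter

/-- A continuous map of compacts is fully closed if images of disjoint closed sets
have finite intersection. -/
def FullyClosed {X Y : Type*} [TopologicalSpace X] [TopologicalSpace Y] (f : X → Y) : Prop :=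
  ∀ A B : Set X, IsClosed A → IsClosed B → Disjoint A B → (f '' A ∩ f '' B).Finite

/-- The fiberwise oscillation `Ω_f(h)(y) = diam (h '' (f⁻¹ {y}))`. -/
noncomputable def fiberOsc {X Y : Type*} [TopologicalSpace X]
    (f : X → Y) (h : C(X, ℝ)) (y : Y) : ℝ :=
  Metric.diam (h '' (f ⁻¹' {y}))

/-- The relation collapsing every fiber outside `K` to a point. -/
def collapseSetoid {X Y : Type*} (f : X → Y) (K : Set Y) : Setoid X where
  r a b := a = b ∨ (f a = f b ∧ f a ∉ K)
  iseqv :=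
    { refl := fun a => Or.inl rfl
      symm := by
        rintro a b (h | ⟨h, h2⟩)
        · exact Or.inl h.symm
        · exact Or.inr ⟨h.symm, h ▸ h2⟩
      trans := by
        rintro a b c (h | ⟨h, h2⟩) (h' | ⟨h', h2'⟩)
        · exact Or.inl (h.trans h')
        · subst h; exact Or.inr ⟨h', h2'⟩
        · subst h'; exact Or.inr ⟨h, h2⟩
        · exact Or.inr ⟨h.trans h', h2⟩ }

theorem collapse_isClosed {X Y : Type*} [TopologicalSpace X] [CompactSpace X] [T2Space X]
    [TopologicalSpace Y] [T2Space Y]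
    (f : X → Y) (hf : Continuous f) (hfc : FullyClosed f) (K : Set Y) :
    IsClosed {p : X × X | p.1 = p.2 ∨ (f p.1 = f p.2 ∧ f p.1 ∉ K)} := by
  rw [← isOpen_compl_iff, isOpen_iff_mem_nhds]
  rintro ⟨a, b⟩ hab
  simp only [mem_compl_iff, mem_ofPred_eq, not_or, not_and, not_not] at hab
  obtain ⟨hne, hK⟩ := hab
  by_cases hfab : f a = f b
  · obtain ⟨U, haU, hU, V, hbV, hV, hUV⟩ := exists_open_nhds_disjoint_closure hne
    have hfin := hfc _ _ isClosed_closure isClosed_closure hUV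
    have hcl : IsClosed ((f '' closure U ∩ f '' closure V) \ K) :=
      (hfin.subset sdiff_subset).isClosed
    have h1 : ∀ᶠ p : X × X in 𝓝 (a, b),
        f p.1 ∉ (f '' closure U ∩ f '' closure V) \ K := by
      have hc : Continuous fun p : X × X => f p.1 := hf.comp continuous_fst
      exact (hcl.isOpen_compl.preimage hc).mem_nhds (fun hx => hx.2 (hK hfab))
    have h2 : ∀ᶠ p : X × X in 𝓝 (a, b), p ∈ U ×ˢ V :=
      (hU.prod hV).mem_nhds ⟨haU, hbV⟩
    filter_upwards [h1, h2]
    rintro ⟨u, v⟩ hu ⟨huU, hvV⟩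
    rintro (h | ⟨h, h'⟩)
    · simp only at h huU hvV
      subst h
      exact Set.disjoint_left.1 hUV (subset_closure huU) (subset_closure hvV)
    · exact hu ⟨⟨⟨u, subset_closure huU, rfl⟩, ⟨v, subset_closure hvV, h.symm⟩⟩, h'⟩
  · have ho : IsOpen {p : X × X | f p.1 ≠ f p.2} :=
      isOpen_ne_fun (hf.comp continuous_fst) (hf.comp continuous_snd)
    filter_upwards [ho.mem_nhds hfab]
    rintro ⟨u, v⟩ hu (h | ⟨h, h'⟩)
    · exact hu (congrArg f h)
    · exact hu h

theorem collapse_isClosedMap {X Y : Type*} [TopologicalSpace X] [CompactSpace X] [T2Space X]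
    [TopologicalSpace Y] [T2Space Y]
    (f : X → Y) (hf : Continuous f) (hfc : FullyClosed f) (K : Set Y) :
    IsClosedMap (Quotient.mk (collapseSetoid f K)) := by
  intro F hF
  have hq : IsQuotientMap (Quotient.mk (collapseSetoid f K)) := isQuotientMap_quot_mk
  rw [← hq.isClosed_preimage]
  have h1 := isClosedMap_snd_of_compactSpace _
    ((collapse_isClosed f hf hfc K).inter (hF.preimage (continuous_fst (Y := X))))
  convert h1 using 1
  ext x
  constructor
  · rintro ⟨y, hy, hyx⟩
    exact ⟨(y, x), ⟨Quotient.exact hyx, hy⟩, rfl⟩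
  · rintro ⟨⟨y, x'⟩, ⟨hyx, hy⟩, rfl⟩
    exact ⟨y, hy, Quotient.sound hyx⟩

theorem normalSpace_of_closedMap {X Z : Type*} [TopologicalSpace X] [NormalSpace X]
    [TopologicalSpace Z] (q : X → Z) (hq : Continuous q) (hs : Function.Surjective q)
    (hc : IsClosedMap q) : NormalSpace Z where
  normal s t hS hT hst := by
    obtain ⟨U, V, hU, hV, hsU, htV, hUV⟩ :=
      normal_separation (hS.preimage hq) (hT.preimage hq) (hst.preimage q)
    refine ⟨(q '' Uᶜ)ᶜ, (q '' Vᶜ)ᶜ, (hc _ hU.isClosed_compl).isOpen_compl,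
      (hc _ hV.isClosed_compl).isOpen_compl, ?_, ?_, ?_⟩
    · rintro z hz ⟨x, hx, rfl⟩
      exact hx (hsU hz)
    · rintro z hz ⟨x, hx, rfl⟩
      exact hx (htV hz)
    · rw [Set.disjoint_left]
      intro z hz hz'
      obtain ⟨x, rfl⟩ := hs z
      have h1 : x ∈ U := by
        by_contra h
        exact hz ⟨x, h, rfl⟩
      have h2 : x ∈ V := by
        by_contra h
        exact hz' ⟨x, h, rfl⟩
      exact Set.disjoint_left.1 hUV h1 h2

/-- for a finite subset `K` of a countable set `A ⊆ Y`, `h ∈ Z_A` and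
`c > 1`, there is `p ∈ Z_K` with `‖p - h‖ ≤ c · sup {Ω_f(h)(y) : y ∈ A \ K}`. -/
theorem exists_approx_in_ZK
    {X Y : Type*} [TopologicalSpace X] [CompactSpace X] [T2Space X]
    [TopologicalSpace Y] [CompactSpace Y] [T2Space Y] [TopologicalSpace.MetrizableSpace Y]
    (f : X → Y) (hf : Continuous f) (hsurj : Function.Surjective f)
    (hfc : FullyClosed f)
    (hfib : ∀ y : Y, TopologicalSpace.MetrizableSpace (f ⁻¹' {y}))
    (A : Set Y) (hA : A.Countable) (K : Set Y) (hK : K.Finite) (hKA : K ⊆ A)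
    (h : C(X, ℝ)) (hh : ∀ y ∉ A, fiberOsc f h y = 0)
    (c : ℝ) (hc : 1 < c) :
    ∃ p : C(X, ℝ),
      ‖p - h‖ ≤ c * sSup (fiberOsc f h '' (A \ K)) ∧
      ∀ y ∉ K, fiberOsc f p y = 0 := by
  have hbdd : ∀ S : Set X, Bornology.IsBounded (h '' S) := fun S =>
    (isCompact_range h.continuous).isBounded.subset (image_subset_range _ _)
  have hba : BddAbove (fiberOsc f h '' (A \ K)) := by
    refine ⟨Metric.diam (range h), ?_⟩
    rintro _ ⟨y, -, rfl⟩
    exact Metric.diam_mono (image_subset_range _ _) (isCompact_range h.continuous).isBounded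
  have hs0 : 0 ≤ sSup (fiberOsc f h '' (A \ K)) := by
    apply Real.sSup_nonneg
    rintro _ ⟨y, -, rfl⟩
    exact Metric.diam_nonneg
  have hosc : ∀ y ∉ K, fiberOsc f h y ≤ sSup (fiberOsc f h '' (A \ K)) := by
    intro y hy
    by_cases hyA : y ∈ A
    · exact le_csSup hba ⟨y, ⟨hyA, hy⟩, rfl⟩
    · rw [hh y hyA]; exact hs0
  generalize sSup (fiberOsc f h '' (A \ K)) = s at *
  rcases hs0.eq_or_lt with hs | hs
  · refine ⟨h, by simp [← hs], fun y hy => le_antisymm (hs ▸ hosc y hy) Metric.diam_nonneg⟩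
  have hcs : s < c * s := by nlinarith
  let q : X → Quotient (collapseSetoid f K) := Quotient.mk (collapseSetoid f K)
  have hqc : Continuous q := continuous_quot_mk
  have hqs : Function.Surjective q := Quotient.mk_surjective
  have hqm : IsClosedMap q := collapse_isClosedMap f hf hfc K
  have hnorm : NormalSpace (Quotient (collapseSetoid f K)) :=
    normalSpace_of_closedMap q hqc hqs hqm
  have hrel : ∀ a b, q a = q b → |h a - h b| ≤ s := by
    intro a b hab
    rcases (Quotient.exact hab : a = b ∨ (f a = f b ∧ f a ∉ K)) with h1 | ⟨h1, h2⟩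
    · subst h1; simpa using hs.le
    · rw [← Real.dist_eq]
      have ha : h a ∈ h '' (f ⁻¹' {f a}) := mem_image_of_mem _ (by simp)
      have hb : h b ∈ h '' (f ⁻¹' {f a}) := mem_image_of_mem _ (by simp [h1])
      exact (Metric.dist_le_diam_of_mem (hbdd _) ha hb).trans (hosc _ h2)
  obtain ⟨g, hg⟩ := exists_continuous_forall_mem_convex_of_local_const
    (X := Quotient (collapseSetoid f K)) (E := ℝ)
    (t := fun z => ⋂ x ∈ q ⁻¹' {z}, Metric.ball (h x) (c * s))
    (fun z => convex_iInter₂ fun x _ => convex_ball _ _) (by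
      intro z
      obtain ⟨x₀, rfl⟩ := hqs z
      refine ⟨h x₀, ?_⟩
      have hF : IsClosed {x | c * s ≤ |h x₀ - h x|} :=
        isClosed_le continuous_const (continuous_const.sub h.continuous).abs
      have hx : q x₀ ∈ (q '' {x | c * s ≤ |h x₀ - h x|})ᶜ := by
        rintro ⟨x, hx, hxx⟩
        exact absurd (hrel _ _ hxx.symm) (not_le.2 (hcs.trans_le hx))
      filter_upwards [(hqm _ hF).isOpen_compl.mem_nhds hx] with w hw
      simp only [mem_iInter, Metric.mem_ball, Real.dist_eq]
      intro x hxw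
      by_contra hcon
      exact hw ⟨x, not_lt.1 hcon, hxw⟩)
  refine ⟨⟨fun x => g (q x), g.continuous.comp hqc⟩, ?_, ?_⟩
  · rw [ContinuousMap.norm_le _ (hs.le.trans hcs.le)]
    intro x
    have := hg (q x)
    simp only [mem_iInter, Metric.mem_ball] at this
    have h3 := this x rfl
    rw [dist_eq_norm] at h3
    exact h3.le
  · intro y hy
    apply Metric.diam_subsingleton
    rintro _ ⟨a, ha, rfl⟩ _ ⟨b, hb, rfl⟩
    have ha' : f a = y := ha
    have hb' : f b = y := hb
    have : q a = q b := Quotient.sound (Or.inr ⟨ha'.trans hb'.symm, ha' ▸ hy⟩)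
    exact congrArg g this
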